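/- arXiv:1801.03543 — 2 statements merged into one kernel-verified Lean document; each statement's English description precedes it below -/
import Mathlib

section
/- Let N be a nonzero complex number. If a formal power series f ∈ ℂ[[t]] satisfies f(t·(1+N·t)⁻¹) = f(t) in ℂ[[t]], then f is constant, i.e. f equals its constant coefficient. (In the variable u with t = u⁻¹, any series in ℂ[[u⁻¹]] invariant under the shift u ↦ u+N is constant; this gives the uniqueness of the normalizing series g and underlies the unitarity of the normalized Yang R-matrix.) -/
/-- Composition `f ↦ f(a)` of a formal power series `f` with a power series `a`
(intended for `a` with zero constant coefficient), defined coefficientwise: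
the `m`-th coefficient of `f(a)` is `∑_{n ≤ m} fₙ · (coeff m of aⁿ)`. -/
noncomputable def PowerSeries.substC (a f : PowerSeries ℂ) : PowerSeries ℂ :=
  PowerSeries.mk fun m =>
    ∑ n ∈ Finset.range (m + 1), PowerSeries.coeff n f * PowerSeries.coeff m (a ^ n)

/-!
Write `a = X b` with `b = 1 + Xᵐ v` and `v(0) ≠ 0`, and let `Xᵏ g` be `f - f(0)` with `k > 0` and
`g(0) ≠ 0`. Since `a ≡ X` modulo `Xᵐ⁺¹`, also `g(a) ≡ g` modulo `Xᵐ⁺¹`, so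
`f(a) - f = Xᵏ (bᵏ g(a) - g) ≡ Xᵏ (bᵏ - 1) g` modulo `Xᵏ⁺ᵐ⁺¹`. As
`bᵏ - 1 = Xᵐ v (1 + b + ⋯ + bᵏ⁻¹)`, the coefficient of `Xᵏ⁺ᵐ` in `f(a) - f` is
`v(0) (1 + λ + ⋯ + λᵏ⁻¹) g(0)`, where `λ = b(0)` is the linear coefficient of `a`. It is nonzero
when `λ = 1` in characteristic zero, and when `λ ≠ 1` is not a root of unity.
-/

section Subst

open PowerSeries

variable {R : Type*} [CommRing R]

theorem X_pow_dvd_subst_sub_subst {S : Type*} [CommRing S] [Algebra R S] {a b : S⟦X⟧} {n : ℕ}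
    (ha : HasSubst a) (hb : HasSubst b) (h : X ^ n ∣ a - b) (f : R⟦X⟧) :
    X ^ n ∣ f.subst a - f.subst b := by
  refine X_pow_dvd_iff.mpr fun j hj ↦ ?_
  rw [map_sub, coeff_subst' ha, coeff_subst' hb, sub_eq_zero]
  refine finsum_congr fun d ↦ ?_
  have hpow : coeff j (a ^ d - b ^ d) = 0 :=
    X_pow_dvd_iff.mp (h.trans (sub_dvd_pow_sub_pow a b d)) j hj
  rw [map_sub, sub_eq_zero] at hpow
  rw [hpow]

theorem coeff_add_subst_X_pow_mul_sub_self {b v : R⟦X⟧} {m : ℕ} (hb : b = 1 + X ^ m * v)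
    (k : ℕ) (g : R⟦X⟧) :
    coeff (k + m) ((X ^ k * g).subst (X * b) - X ^ k * g) =
      constantCoeff v * (∑ i ∈ Finset.range k, constantCoeff b ^ i) * constantCoeff g := by
  have ha : HasSubst (X * b) := .of_constantCoeff_zero' (by simp)
  obtain ⟨h, hg⟩ : X ^ (m + 1) ∣ g.subst (X * b) - g := by
    have hX : X ^ (m + 1) ∣ X * b - X := ⟨v, by rw [hb]; ring⟩
    simpa only [X_subst] using X_pow_dvd_subst_sub_subst ha .X' hX g
  have hgeom : b ^ k - 1 = X ^ m * v * ∑ i ∈ Finset.range k, b ^ i := by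
    rw [← mul_geom_sum, hb, add_sub_cancel_left]
  have hfactor : (X ^ k * g).subst (X * b) - X ^ k * g =
      X ^ (k + m) * (v * (∑ i ∈ Finset.range k, b ^ i) * g + X * (b ^ k * h)) := by
    rw [subst_mul ha, subst_pow ha, subst_X ha]
    linear_combination X ^ k * b ^ k * hg + X ^ k * g * hgeom
  rw [hfactor, coeff_X_pow_mul', if_pos le_rfl, tsub_self, coeff_zero_eq_constantCoeff_apply]
  simp only [map_add, map_mul, map_sum, map_pow, constantCoeff_X, zero_mul, add_zero]

theorem eq_zero_of_subst_eq_self [NoZeroDivisors R] {a f : R⟦X⟧} (ha : constantCoeff a = 0)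
    (hgeom : ∀ k ≠ 0, ∑ i ∈ Finset.range k, coeff 1 a ^ i ≠ 0) (haX : a ≠ X)
    (hf₀ : constantCoeff f = 0) (hf : f.subst a = f) : f = 0 := by
  obtain ⟨b, rfl⟩ := X_dvd_iff.mpr ha
  have hb : b - 1 ≠ 0 := fun h ↦ haX (by rw [sub_eq_zero.mp h, mul_one])
  have hb_eq : b = 1 + X ^ (b - 1).order.toNat * (b - 1).divXPowOrder := by
    rw [X_pow_order_mul_divXPowOrder, add_sub_cancel]
  have hcoeff_one : coeff 1 (X * b) = constantCoeff b := by
    rw [← zero_add 1, coeff_succ_X_mul, coeff_zero_eq_constantCoeff_apply]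
  by_contra hf_ne
  have hlead : constantCoeff f.divXPowOrder ≠ 0 :=
    mt constantCoeff_divXPowOrder_eq_zero_iff.mp hf_ne
  have horder : f.order.toNat ≠ 0 := by
    intro h
    rw [constantCoeff_divXPowOrder, h, coeff_zero_eq_constantCoeff_apply] at hlead
    exact hlead hf₀
  have hcoeff := coeff_add_subst_X_pow_mul_sub_self hb_eq f.order.toNat f.divXPowOrder
  rw [X_pow_order_mul_divXPowOrder, hf, sub_self, map_zero, ← hcoeff_one] at hcoeff
  exact mul_ne_zero (mul_ne_zero (mt constantCoeff_divXPowOrder_eq_zero_iff.mp hb)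
    (hgeom _ horder)) hlead hcoeff.symm

theorem statement1_general [NoZeroDivisors R] {a f : R⟦X⟧} (ha : constantCoeff a = 0)
    (hgeom : ∀ k ≠ 0, ∑ i ∈ Finset.range k, coeff 1 a ^ i ≠ 0) (haX : a ≠ X)
    (hf : f.subst a = f) : f = C (constantCoeff f) := by
  have hC : (C (constantCoeff f)).subst a = C (constantCoeff f) := subst_C _
  refine sub_eq_zero.mp (eq_zero_of_subst_eq_self ha hgeom haX ?_ ?_)
  · rw [map_sub, constantCoeff_C, sub_self]
  · rw [subst_sub (.of_constantCoeff_zero' ha), hf, hC]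

theorem substC_eq_subst {a : ℂ⟦X⟧} (ha : constantCoeff a = 0) (f : ℂ⟦X⟧) :
    substC a f = f.subst a := by
  ext m
  rw [substC, coeff_mk, coeff_subst' (.of_constantCoeff_zero' ha)]
  refine (finsum_eq_sum_of_support_subset _ fun n hn ↦ ?_).symm
  by_contra hmn
  have hlt : m < n := by simpa using hmn
  have hpow : coeff m (a ^ n) = 0 :=
    X_pow_dvd_iff.mp (pow_dvd_pow_of_dvd (X_dvd_iff.mpr ha) n) m hlt
  exact hn (by simp only [hpow, mul_zero])

theorem X_mul_one_add_smul_X_inv_ne_X {K : Type*} [Field K] {c : K} (hc : c ≠ 0) :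
    X * (1 + c • X : K⟦X⟧)⁻¹ ≠ X := by
  intro h
  have hX : X * (1 + c • X) = (X : K⟦X⟧) :=
    (PowerSeries.eq_mul_inv_iff_mul_eq (by simp)).mp h.symm
  rw [mul_eq_left₀ X_ne_zero, add_eq_left] at hX
  exact (smul_ne_zero hc X_ne_zero) hX

end Subst

/-- For a nonzero complex number `N`, any formal power series `f ∈ ℂ[[t]]` with
`f(t·(1+N·t)⁻¹) = f(t)` is constant, i.e. equals its constant coefficient.
(In the variable `u` with `t = u⁻¹`: any series invariant under `u ↦ u + N` is constant.) -/
theorem statement1 (N : ℂ) (hN : N ≠ 0) (f : PowerSeries ℂ)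
    (hf : PowerSeries.substC (PowerSeries.X * (1 + N • PowerSeries.X)⁻¹) f = f) :
    f = PowerSeries.C (PowerSeries.constantCoeff f) := by
  rw [substC_eq_subst (by simp)] at hf
  exact statement1_general (by simp) (by simp) (X_mul_one_add_smul_X_inv_ne_X hN) hf
end

section
/- Let N ≥ 2 be an integer, let g ∈ ℂ[[t]] be the unique power series with constant coefficient 1 satisfying g(t·(1+N·t)⁻¹) = g(t)·(1−t²), and let σ : ℂ[[h,t]] → ℂ[[h,t]] be the continuous ℂ-algebra endomorphism fixing h with σ(t) = t·(1+h·N·t)⁻¹ (corresponding to the shift u ↦ u + hN under t = u⁻¹). Set R̄ = g(h·t)·(1 − h·t·P), an invertible element of (End ℂ^N ⊗ End ℂ^N)[[h,t]]. Then the crossing symmetry properties hold: (R̄⁻¹)^{t₁} · (σR̄)^{t₁} = 1 and (R̄⁻¹)^{t₂} · (σR̄)^{t₂} = 1, where t₁ (respectively t₂) denotes the partial transpose in the first (respectively second) tensor factor applied coefficientwise, and σR̄ is obtained by applying σ to each matrix entry of R̄ (it equals the normalized R-matrix R̄(u+hN)). -/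
/-- Substitution of a two-variable power series `a ∈ ℂ[[h,t]]` (intended with zero
constant coefficient) into a one-variable power series `f`, giving `f(a)`,
defined coefficientwise. -/
noncomputable def substM (a : MvPowerSeries (Fin 2) ℂ) (f : PowerSeries ℂ) :
    MvPowerSeries (Fin 2) ℂ :=
  fun d => ∑ n ∈ Finset.range (d.sum (fun _ k => k) + 1),
    PowerSeries.coeff n f * MvPowerSeries.coeff d (a ^ n)

/-- The continuous `ℂ`-algebra endomorphism of `ℂ[[h,t]]` fixing `h = X 0` and sending
`t = X 1` to `a` (intended with zero constant coefficient):
`f(h,t) ↦ f(h,a) = ∑_{m,n} f_{m,n} hᵐ aⁿ`, defined coefficientwise (the coefficient of a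
monomial `e` receives contributions only from `(m,n)` with `m + n ≤ deg e`). -/
noncomputable def subst2 (a f : MvPowerSeries (Fin 2) ℂ) : MvPowerSeries (Fin 2) ℂ :=
  fun e => ∑ p ∈ Finset.range (e.sum (fun _ k => k) + 1) ×ˢ
      Finset.range (e.sum (fun _ k => k) + 1),
    MvPowerSeries.coeff (Finsupp.single 0 p.1 + Finsupp.single 1 p.2) f *
      MvPowerSeries.coeff e (MvPowerSeries.X 0 ^ p.1 * a ^ p.2)

/-- The permutation operator `P : x ⊗ y ↦ y ⊗ x` on `ℂ^N ⊗ ℂ^N`, as a matrix with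
entries in `ℂ[[h,t]]`. -/
noncomputable def Pmat (N : ℕ) :
    Matrix (Fin N × Fin N) (Fin N × Fin N) (MvPowerSeries (Fin 2) ℂ) :=
  Matrix.of fun p q => if p.1 = q.2 ∧ p.2 = q.1 then 1 else 0

/-- The normalized Yang R-matrix `R̄ = g(h·t)·(1 − h·t·P)` as an element of
`(End ℂ^N ⊗ End ℂ^N)[[h,t]]` (variables `h = X 0`, `t = X 1`). -/
noncomputable def Rbar (N : ℕ) (g : PowerSeries ℂ) :
    Matrix (Fin N × Fin N) (Fin N × Fin N) (MvPowerSeries (Fin 2) ℂ) :=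
  substM (MvPowerSeries.X 0 * MvPowerSeries.X 1) g •
    ((1 : Matrix (Fin N × Fin N) (Fin N × Fin N) (MvPowerSeries (Fin 2) ℂ))
      - (MvPowerSeries.X 0 * MvPowerSeries.X 1 : MvPowerSeries (Fin 2) ℂ) • Pmat N)

/-- Partial transpose in the first tensor factor: for `A = Σ aᵢ ⊗ bᵢ`,
`A^{t₁} = Σ aᵢᵀ ⊗ bᵢ`, i.e. `(A^{t₁})_{(i,j),(k,l)} = A_{(k,j),(i,l)}`. -/
def pt1 {N : ℕ} {R : Type*}
    (A : Matrix (Fin N × Fin N) (Fin N × Fin N) R) :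
    Matrix (Fin N × Fin N) (Fin N × Fin N) R :=
  Matrix.of fun p q => A (q.1, p.2) (p.1, q.2)

/-- Partial transpose in the second tensor factor: for `A = Σ aᵢ ⊗ bᵢ`,
`A^{t₂} = Σ aᵢ ⊗ bᵢᵀ`, i.e. `(A^{t₂})_{(i,j),(k,l)} = A_{(i,l),(k,j)}`. -/
def pt2 {N : ℕ} {R : Type*}
    (A : Matrix (Fin N × Fin N) (Fin N × Fin N) R) :
    Matrix (Fin N × Fin N) (Fin N × Fin N) R :=
  Matrix.of fun p q => A (p.1, q.2) (q.1, p.2)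

/-!
For a commutative ring and scalars `c`, `x`, write `R(c, x) = c (1 - x P)`. Since `P² = 1`,
`R(c, x) R(u, -x) = c u (1 - x²)`, so `S = R(u, -x)` inverts `R(c, x)` as soon as
`u c (1 - x²) = 1`. The partial transpose `Q = P^{t₁}` is the rank-one operator attached to
`∑ᵢ eᵢ ⊗ eᵢ`, whence `Q² = N Q` and
`R(u, -x)^{t₁} R(d, y)^{t₁} = u d (1 - (y (1 + N x) - x) Q)`.
With `x = h t`, the shift `σ` sends `x` to the `y` solving `y (1 + N x) = x`, and the functional
equation of `g`, evaluated at `x`, says that it sends `c = g(x)` to `d = g(y) = c (1 - x²)`; hence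
the right-hand side is `1`. The second identity is the full transpose of the first, the factors
commuting because they are inverse to each other.
-/

section Substitution

open MvPowerSeries

variable {τ R : Type*} [CommRing R]

theorem coeff_pow_mul_pow_eq_zero_of_degree_lt {a b : MvPowerSeries τ R}
    (ha : constantCoeff a = 0) (hb : constantCoeff b = 0)
    {m n : ℕ} {e : τ →₀ ℕ} (he : e.degree < m + n) :
    coeff e (a ^ m * b ^ n) = 0 := by
  apply coeff_of_lt_order
  calc (e.degree : ℕ∞) < (m : ℕ∞) + n := by exact_mod_cast he
    _ ≤ (a ^ m).order + (b ^ n).order :=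
      add_le_add (le_order_pow_of_constantCoeff_eq_zero m ha)
        (le_order_pow_of_constantCoeff_eq_zero n hb)
    _ ≤ (a ^ m * b ^ n).order := le_order_mul

theorem coeff_subst_eq_sum_range {a : MvPowerSeries τ R} (ha : constantCoeff a = 0)
    (f : PowerSeries R) (e : τ →₀ ℕ) :
    coeff e (f.subst a) = ∑ n ∈ Finset.range (e.degree + 1),
      PowerSeries.coeff n f * coeff e (a ^ n) := by
  rw [PowerSeries.coeff_subst (.of_constantCoeff_zero ha)]
  refine finsum_eq_sum_of_support_subset _ fun n hn => ?_
  by_contra hlt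
  have hlt : e.degree < n + 0 := by simpa using hlt
  have hcoeff := coeff_pow_mul_pow_eq_zero_of_degree_lt ha ha hlt
  rw [pow_zero, mul_one] at hcoeff
  exact hn (by simp only [hcoeff, smul_zero])

theorem hasSubst_pair {a b : MvPowerSeries τ R} (ha : constantCoeff a = 0)
    (hb : constantCoeff b = 0) : HasSubst ![a, b] :=
  hasSubst_of_constantCoeff_zero (Fin.forall_fin_two.2 ⟨ha, hb⟩)

theorem coeff_subst_pair_eq_sum_range {a b : MvPowerSeries τ R}
    (ha : constantCoeff a = 0) (hb : constantCoeff b = 0)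
    (f : MvPowerSeries (Fin 2) R) (e : τ →₀ ℕ) :
    coeff e (f.subst ![a, b]) =
      ∑ p ∈ Finset.range (e.degree + 1) ×ˢ Finset.range (e.degree + 1),
        coeff (Finsupp.single 0 p.1 + Finsupp.single 1 p.2) f *
          coeff e (a ^ p.1 * b ^ p.2) := by
  have hexp (p : ℕ × ℕ) : (finTwoArrowEquiv' ℕ).symm p =
      Finsupp.single 0 p.1 + Finsupp.single 1 p.2 := by
    ext i
    fin_cases i <;> simp [finTwoArrowEquiv']
  have hprod (p : ℕ × ℕ) : (Finsupp.single (0 : Fin 2) p.1 + Finsupp.single 1 p.2).prod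
      (fun s k => ![a, b] s ^ k) = a ^ p.1 * b ^ p.2 := by
    rw [Finsupp.prod_fintype _ _ fun _ => pow_zero _]
    simp
  rw [coeff_subst (hasSubst_pair ha hb), ← finsum_comp_equiv (finTwoArrowEquiv' ℕ).symm]
  simp only [hexp, hprod, smul_eq_mul]
  refine finsum_eq_sum_of_support_subset _ fun p hp => ?_
  by_contra hlt
  have hlt : e.degree < p.1 + p.2 := by
    simp only [Finset.coe_product, Finset.coe_range, Set.mem_prod, Set.mem_Iio] at hlt
    omega
  exact hp (by simp only [coeff_pow_mul_pow_eq_zero_of_degree_lt ha hb hlt, mul_zero])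

theorem subst_subst_powerSeries {σ : Type*} {a : σ → MvPowerSeries τ R}
    (ha : HasSubst a) {x : MvPowerSeries σ R} (hx : PowerSeries.HasSubst x)
    (f : PowerSeries R) : (f.subst x).subst a = f.subst (x.subst a) := by
  rw [PowerSeries.subst_def, PowerSeries.subst_def, subst_comp_subst_apply hx.const ha]

theorem subst_mul_one_add_smul_eq_self {x : MvPowerSeries τ R} (hx : PowerSeries.HasSubst x)
    {c : R} {b : PowerSeries R} (hb : b * (1 + c • PowerSeries.X) = PowerSeries.X) :
    b.subst x * (1 + c • x) = x := by
  have h := congrArg (PowerSeries.substAlgHom (R := R) hx) hb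
  rwa [map_mul, map_add, map_one, map_smul, PowerSeries.substAlgHom_X,
    PowerSeries.coe_substAlgHom] at h

theorem constantCoeff_eq_zero_of_mul_one_add_smul_eq_X {c : R} {b : PowerSeries R}
    (hb : b * (1 + c • PowerSeries.X) = PowerSeries.X) : PowerSeries.constantCoeff b = 0 := by
  simpa using congrArg PowerSeries.constantCoeff hb

theorem X_mul_inv_mul_one_add_smul {K : Type*} [Field K] (c : K) :
    PowerSeries.X * (1 + c • PowerSeries.X : PowerSeries K)⁻¹ * (1 + c • PowerSeries.X) =
      PowerSeries.X := by
  rw [mul_assoc, PowerSeries.inv_mul_cancel _ (by simp), mul_one]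

theorem isUnit_one_add_smul {x : MvPowerSeries τ R}
    (hx : constantCoeff x = 0) (c : R) : IsUnit (1 + c • x) := by
  simp [isUnit_iff_constantCoeff, hx]

theorem subst_eq_subst_mul_of_functional_equation {g p b : PowerSeries R} {c : R}
    (hb : b * (1 + c • PowerSeries.X) = PowerSeries.X) (hg : g.subst b = g * p)
    {x y : MvPowerSeries τ R} (hx : constantCoeff x = 0)
    (hy : y * (1 + c • x) = x) : g.subst y = g.subst x * p.subst x := by
  have hxs : PowerSeries.HasSubst x := .of_constantCoeff_zero hx
  have hbs : PowerSeries.HasSubst b :=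
    .of_constantCoeff_zero' (constantCoeff_eq_zero_of_mul_one_add_smul_eq_X hb)
  have hby : b.subst x = y := (isUnit_one_add_smul hx c).mul_right_cancel
    ((subst_mul_one_add_smul_eq_self hxs hb).trans hy.symm)
  rw [← hby, ← PowerSeries.subst_comp_subst_apply hbs hxs, hg, PowerSeries.subst_mul hxs]

theorem isUnit_subst_mul_one_sub_sq {g : PowerSeries R} (hg : IsUnit g)
    {x : MvPowerSeries τ R} (hx : constantCoeff x = 0) :
    IsUnit (g.subst x * (1 - x ^ 2)) := by
  have hgx := hg.map (PowerSeries.substAlgHom (R := R) (.of_constantCoeff_zero hx))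
  rw [PowerSeries.coe_substAlgHom] at hgx
  exact hgx.mul (by simp [isUnit_iff_constantCoeff, hx])

end Substitution

section YangMatrix

open Matrix

variable {N : ℕ} {R : Type*} [CommRing R]

theorem pt1_smul_one_sub_smul (c x : R) (A : Matrix (Fin N × Fin N) (Fin N × Fin N) R) :
    pt1 (c • (1 - x • A)) = c • (1 - x • pt1 A) := by
  ext ⟨i, j⟩ ⟨k, l⟩
  simp [pt1, Matrix.one_apply, eq_comm]

theorem pt2_eq_transpose_pt1 {α : Type*} (A : Matrix (Fin N × Fin N) (Fin N × Fin N) α) :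
    pt2 A = (pt1 A)ᵀ :=
  rfl

theorem pt2_mul_pt2_eq_one {A B : Matrix (Fin N × Fin N) (Fin N × Fin N) R}
    (h : pt1 A * pt1 B = 1) : pt2 A * pt2 B = 1 := by
  rw [pt2_eq_transpose_pt1, pt2_eq_transpose_pt1, ← transpose_mul, mul_eq_one_comm.1 h,
    transpose_one]

variable (N)

/-- The `R`-matrix `c (1 - x P)` on `R^N ⊗ R^N` over a commutative ring, where `P` is the flip
`v ⊗ w ↦ w ⊗ v`; the normalized Yang `R`-matrix is the case `c = g(h t)`, `x = h t`. -/
def yangMatrix (c x : R) : Matrix (Fin N × Fin N) (Fin N × Fin N) R :=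
  c • (1 - x • Equiv.Perm.permMatrix R (Equiv.prodComm (Fin N) (Fin N)))

/-- The partial transpose `Q` of the flip, written as the rank-one matrix `ω ωᵀ` for
`ω = ∑ᵢ eᵢ ⊗ eᵢ`. -/
def cupCapMatrix (R : Type*) [CommRing R] : Matrix (Fin N × Fin N) (Fin N × Fin N) R :=
  vecMulVec (vec 1) (vec 1)

theorem yangMatrix_map {S : Type*} [CommRing S] (φ : R →+* S) (c x : R) :
    (yangMatrix N c x).map φ = yangMatrix N (φ c) (φ x) := by
  ext p q
  simp [yangMatrix, PEquiv.toMatrix_apply, Matrix.one_apply, apply_ite φ]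

theorem permMatrix_prodComm_mul_self :
    Equiv.Perm.permMatrix R (Equiv.prodComm (Fin N) (Fin N)) *
      Equiv.Perm.permMatrix R (Equiv.prodComm (Fin N) (Fin N)) = 1 := by
  rw [← permMatrix_mul, ← permMatrix_one]
  rfl

theorem yangMatrix_mul_yangMatrix_neg (c u x : R) :
    yangMatrix N c x * yangMatrix N u (-x) = (c * u * (1 - x ^ 2)) • 1 := by
  simp only [yangMatrix, Matrix.smul_mul, Matrix.mul_smul, mul_sub, sub_mul, one_mul, mul_one,
    permMatrix_prodComm_mul_self]
  module

theorem cupCapMatrix_mul_self :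
    cupCapMatrix N R * cupCapMatrix N R = (N : R) • cupCapMatrix N R := by
  rw [cupCapMatrix, vecMulVec_mul_vecMulVec, vec_dotProduct_vec, vecMulVec_smul]
  simp

theorem pt1_permMatrix_prodComm :
    pt1 (Equiv.Perm.permMatrix R (Equiv.prodComm (Fin N) (Fin N))) = cupCapMatrix N R := by
  ext ⟨i, j⟩ ⟨k, l⟩
  simp [pt1, cupCapMatrix, vecMulVec_apply, PEquiv.toMatrix_apply, Matrix.one_apply, ← ite_and,
    and_comm, eq_comm]

theorem pt1_yangMatrix (c x : R) : pt1 (yangMatrix N c x) = c • (1 - x • cupCapMatrix N R) := by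
  rw [yangMatrix, pt1_smul_one_sub_smul, pt1_permMatrix_prodComm]

theorem pt1_yangMatrix_mul_pt1_yangMatrix (c d x y : R) :
    pt1 (yangMatrix N c x) * pt1 (yangMatrix N d y) =
      (c * d) • (1 - (x + y - N * (x * y)) • cupCapMatrix N R) := by
  simp only [pt1_yangMatrix, Matrix.smul_mul, Matrix.mul_smul, mul_sub, sub_mul, one_mul, mul_one,
    cupCapMatrix_mul_self]
  module

theorem pt1_yangMatrix_neg_mul_pt1_yangMatrix_eq_one {u d x y : R} (hud : u * d = 1)
    (hy : y * (1 + N * x) = x) : pt1 (yangMatrix N u (-x)) * pt1 (yangMatrix N d y) = 1 := by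
  have hcoeff : -x + y - N * (-x * y) = 0 := by linear_combination hy
  rw [pt1_yangMatrix_mul_pt1_yangMatrix, hud, hcoeff, zero_smul, sub_zero, one_smul]

end YangMatrix

section Rbar

open MvPowerSeries

theorem substC_eq_subst_s3 {a : PowerSeries ℂ} (ha : PowerSeries.constantCoeff a = 0)
    (f : PowerSeries ℂ) : PowerSeries.substC a f = f.subst a := by
  ext m
  rw [PowerSeries.substC, PowerSeries.coeff_mk, PowerSeries.coeff,
    coeff_subst_eq_sum_range ha, Finsupp.degree_single]

theorem substM_eq_subst {a : MvPowerSeries (Fin 2) ℂ} (ha : constantCoeff a = 0)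
    (f : PowerSeries ℂ) : substM a f = f.subst a :=
  ext fun e => (coeff_subst_eq_sum_range ha f e).symm

theorem subst2_eq_subst {a : MvPowerSeries (Fin 2) ℂ} (ha : constantCoeff a = 0)
    (f : MvPowerSeries (Fin 2) ℂ) : subst2 a f = f.subst ![X 0, a] :=
  ext fun e => (coeff_subst_pair_eq_sum_range (constantCoeff_X 0) ha f e).symm

theorem Pmat_eq_permMatrix (N : ℕ) :
    Pmat N = Equiv.Perm.permMatrix _ (Equiv.prodComm (Fin N) (Fin N)) := by
  ext ⟨i, j⟩ ⟨k, l⟩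
  simp [Pmat, PEquiv.toMatrix_apply, and_comm]

theorem Rbar_eq_yangMatrix (N : ℕ) (g : PowerSeries ℂ) :
    Rbar N g = yangMatrix N (g.subst (X 0 * X 1)) (X 0 * X 1) := by
  rw [Rbar, yangMatrix, substM_eq_subst (by simp), Pmat_eq_permMatrix]

theorem Rbar_map_subst2 (N : ℕ) (g : PowerSeries ℂ) {a : MvPowerSeries (Fin 2) ℂ}
    (ha : constantCoeff a = 0) :
    (Rbar N g).map (subst2 a) = yangMatrix N (g.subst (X 0 * a)) (X 0 * a) := by
  have hsubst := hasSubst_pair (constantCoeff_X (R := ℂ) (0 : Fin 2)) ha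
  have hsubst2 : subst2 a = (substAlgHom (R := ℂ) hsubst : _ →+* _) :=
    funext fun f => by simp [subst2_eq_subst ha, substAlgHom_apply]
  have hx : (X 0 * X 1 : MvPowerSeries (Fin 2) ℂ).subst ![X 0, a] = X 0 * a := by
    simp [subst_mul hsubst, subst_X hsubst]
  rw [hsubst2, Rbar_eq_yangMatrix, yangMatrix_map]
  simp only [RingHom.coe_coe, substAlgHom_apply]
  rw [subst_subst_powerSeries hsubst (.of_constantCoeff_zero (by simp)), hx]

/-- The image `t (1 + h N t)⁻¹` of `t = u⁻¹` under the shift `u ↦ u + h N`. -/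
noncomputable def shiftedT (N : ℕ) : MvPowerSeries (Fin 2) ℂ :=
  X 1 * invOfUnit (1 + C (N : ℂ) * X 0 * X 1) 1

theorem constantCoeff_shiftedT (N : ℕ) : constantCoeff (shiftedT N) = 0 := by
  simp [shiftedT]

theorem X_zero_mul_shiftedT_mul (N : ℕ) :
    X 0 * shiftedT N * (1 + (N : ℂ) • (X 0 * X 1 : MvPowerSeries (Fin 2) ℂ)) = X 0 * X 1 := by
  have hinv := mul_invOfUnit (1 + C (N : ℂ) * X 0 * X 1 : MvPowerSeries (Fin 2) ℂ) 1 (by simp)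
  rw [smul_eq_C_mul, shiftedT]
  linear_combination (X 0 * X 1) * hinv

theorem subst_X_zero_mul_shiftedT {N : ℕ} {g : PowerSeries ℂ}
    (hg : PowerSeries.substC (PowerSeries.X * (1 + (N : ℂ) • PowerSeries.X)⁻¹) g
        = g * (1 - PowerSeries.X ^ 2)) :
    g.subst (X 0 * shiftedT N) =
      g.subst (X 0 * X 1 : MvPowerSeries (Fin 2) ℂ) * (1 - (X 0 * X 1) ^ 2) := by
  have hb := X_mul_inv_mul_one_add_smul (N : ℂ)
  have hx : constantCoeff (X 0 * X 1 : MvPowerSeries (Fin 2) ℂ) = 0 := by simp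
  rw [substC_eq_subst_s3 (constantCoeff_eq_zero_of_mul_one_add_smul_eq_X hb)] at hg
  rw [subst_eq_subst_mul_of_functional_equation hb hg hx (X_zero_mul_shiftedT_mul N),
    ← PowerSeries.coe_substAlgHom (.of_constantCoeff_zero hx), map_sub, map_one, map_pow,
    PowerSeries.substAlgHom_X]

end Rbar

/-- Crossing symmetry of the normalized Yang R-matrix: with `g` the normalizing series and
`σ` the endomorphism of `ℂ[[h,t]]` fixing `h` and sending `t` to `t·(1+h·N·t)⁻¹`
(the shift `u ↦ u + hN`), the matrix `R̄ = g(h·t)(1−h·t·P)` is invertible and its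
(two-sided) inverse `S` satisfies `S^{t₁}·(σR̄)^{t₁} = 1` and `S^{t₂}·(σR̄)^{t₂} = 1`,
where `σR̄` is obtained by applying `σ` entrywise. -/
theorem statement3 (N : ℕ) (hN : 2 ≤ N) (g : PowerSeries ℂ)
    (hg1 : PowerSeries.constantCoeff g = 1)
    (hg : PowerSeries.substC (PowerSeries.X * (1 + (N : ℂ) • PowerSeries.X)⁻¹) g
        = g * (1 - PowerSeries.X ^ 2)) :
    ∃ S : Matrix (Fin N × Fin N) (Fin N × Fin N) (MvPowerSeries (Fin 2) ℂ),
      Rbar N g * S = 1 ∧ S * Rbar N g = 1 ∧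
      pt1 S * pt1 ((Rbar N g).map (subst2 (MvPowerSeries.X 1 *
        MvPowerSeries.invOfUnit
          (1 + MvPowerSeries.C (N : ℂ) * MvPowerSeries.X 0 * MvPowerSeries.X 1)
          1))) = 1 ∧
      pt2 S * pt2 ((Rbar N g).map (subst2 (MvPowerSeries.X 1 *
        MvPowerSeries.invOfUnit
          (1 + MvPowerSeries.C (N : ℂ) * MvPowerSeries.X 0 * MvPowerSeries.X 1)
          1))) = 1 := by
  set x : MvPowerSeries (Fin 2) ℂ := MvPowerSeries.X 0 * MvPowerSeries.X 1
  have hy : MvPowerSeries.X 0 * shiftedT N * (1 + (N : MvPowerSeries (Fin 2) ℂ) * x) = x := by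
    simpa [Nat.cast_smul_eq_nsmul, nsmul_eq_mul] using X_zero_mul_shiftedT_mul N
  have hunit : IsUnit (g.subst x * (1 - x ^ 2)) :=
    isUnit_subst_mul_one_sub_sq (PowerSeries.isUnit_iff_constantCoeff.2 (hg1 ▸ isUnit_one))
      (by simp [x])
  obtain ⟨u, hu⟩ := hunit.exists_left_inv
  have hinv : Rbar N g * yangMatrix N u (-x) = 1 := by
    rw [Rbar_eq_yangMatrix, yangMatrix_mul_yangMatrix_neg, mul_right_comm, mul_comm, hu, one_smul]
  have hσ : (Rbar N g).map (subst2 (shiftedT N)) =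
      yangMatrix N (g.subst x * (1 - x ^ 2)) (MvPowerSeries.X 0 * shiftedT N) := by
    rw [Rbar_map_subst2 N g (constantCoeff_shiftedT N), subst_X_zero_mul_shiftedT hg]
  have hcross : pt1 (yangMatrix N u (-x)) * pt1 ((Rbar N g).map (subst2 (shiftedT N))) = 1 :=
    hσ ▸ pt1_yangMatrix_neg_mul_pt1_yangMatrix_eq_one N hu hy
  exact ⟨yangMatrix N u (-x), hinv, mul_eq_one_comm.1 hinv, hcross, pt2_mul_pt2_eq_one hcross⟩
end
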